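/- Assume 𝒞 is Fatou closed. The following are equivalent: (a) every bounded measurable X : Ω → ℝ with X ≥ 0 q.s. that belongs to 𝒞̃_λ for some λ ≥ 0 is q.s. equal to 0; (b) ρ_{𝒞̃_λ}(ξ) > 0 for every λ ≥ 0 and every bounded measurable ξ : Ω → ℝ with ξ ≥ 0 q.s. and ξ not q.s. equal to 0; (c) ρ_{𝒞̃_λ}(1_A) > 0 for every λ ≥ 0 and every A ∈ ℱ that is not 𝒫-polar. -/

import Mathlib

open MeasureTheory Filter Topology

namespace Paper

variable {Ω : Type*} [MeasurableSpace Ω]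

/-- `N` is a `Ps`-polar set: it is contained in a measurable set which is null
for every measure in `Ps`. -/
def Polar (Ps : Set (Measure Ω)) (N : Set Ω) : Prop :=
  ∃ N' : Set Ω, MeasurableSet N' ∧ N ⊆ N' ∧ ∀ P ∈ Ps, P N' = 0

/-- `X ≤ Y` holds `Ps`-quasi surely. -/
def LeQS (Ps : Set (Measure Ω)) (X Y : Ω → ℝ) : Prop :=
  Polar Ps {ω | ¬ X ω ≤ Y ω}

/-- `X = Y` holds `Ps`-quasi surely. -/
def EqQS (Ps : Set (Measure Ω)) (X Y : Ω → ℝ) : Prop :=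
  Polar Ps {ω | X ω ≠ Y ω}

/-- The set of quasi-sure bounds of `X` relative to the weight `W`:
all `m ≥ 0` such that `|X| ≤ m • W` quasi surely. -/
def Bounds (Ps : Set (Measure Ω)) (W X : Ω → ℝ) : Set ℝ :=
  {m | 0 ≤ m ∧ Polar Ps {ω | m * W ω < |X ω|}}

/-- Membership in the space `L^W`. -/
def MemLW (Ps : Set (Measure Ω)) (W X : Ω → ℝ) : Prop :=
  Measurable X ∧ (Bounds Ps W X).Nonempty

/-- The norm `‖X‖_W` (for `W = 1` this is the quasi-sure sup-norm `‖·‖_{Ps,∞}`). -/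
noncomputable def normW (Ps : Set (Measure Ω)) (W X : Ω → ℝ) : ℝ :=
  sInf (Bounds Ps W X)

/-- `Kc` is a convex cone of measurable functions containing `0`. -/
def IsConvexCone (Kc : Set (Ω → ℝ)) : Prop :=
  (∀ k ∈ Kc, Measurable k) ∧ (fun _ => (0 : ℝ)) ∈ Kc ∧
  (∀ k ∈ Kc, ∀ c : ℝ, 0 ≤ c → (fun ω => c * k ω) ∈ Kc) ∧
  (∀ k₁ ∈ Kc, ∀ k₂ ∈ Kc, (fun ω => k₁ ω + k₂ ω) ∈ Kc)

/-- `Kc_λ`: the elements of `Kc` bounded below by `-λ • W` quasi surely. -/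
def Klam (Ps : Set (Measure Ω)) (W : Ω → ℝ) (Kc : Set (Ω → ℝ)) (l : ℝ) : Set (Ω → ℝ) :=
  {k ∈ Kc | LeQS Ps (fun ω => -l * W ω) k}

/-- The cone `𝒞` of claims super-replicable at zero cost. -/
def coneC (Ps : Set (Measure Ω)) (W : Ω → ℝ) (Kc : Set (Ω → ℝ)) : Set (Ω → ℝ) :=
  {X | MemLW Ps W X ∧ ∃ k ∈ Kc, LeQS Ps X k}

/-- The set `𝒞_λ`. -/
def coneCLam (Ps : Set (Measure Ω)) (W : Ω → ℝ) (Kc : Set (Ω → ℝ)) (l : ℝ) : Set (Ω → ℝ) :=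
  {X | MemLW Ps W X ∧ ∃ k ∈ Klam Ps W Kc l, LeQS Ps X k}

/-- The sensitive cone `𝒞̃`. -/
def coneCTilde (Ps : Set (Measure Ω)) (W : Ω → ℝ) (Kc : Set (Ω → ℝ)) : Set (Ω → ℝ) :=
  {X | MemLW Ps W X ∧ ∀ P ∈ Ps, ∃ k ∈ Kc, ∀ᵐ ω ∂P, X ω ≤ k ω}

/-- The sensitive set `𝒞̃_λ`. -/
def coneCTildeLam (Ps : Set (Measure Ω)) (W : Ω → ℝ) (Kc : Set (Ω → ℝ)) (l : ℝ) :
    Set (Ω → ℝ) :=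
  {X | MemLW Ps W X ∧ ∀ P ∈ Ps, ∃ k ∈ Klam Ps W Kc l, ∀ᵐ ω ∂P, X ω ≤ k ω}

/-- `𝒞̂ = ⋃_{λ ≥ 0} 𝒞̃_λ`. -/
def coneCHat (Ps : Set (Measure Ω)) (W : Ω → ℝ) (Kc : Set (Ω → ℝ)) : Set (Ω → ℝ) :=
  ⋃ l ∈ {r : ℝ | 0 ≤ r}, coneCTildeLam Ps W Kc l

/-- A set `A ⊆ L^W` is Fatou closed: it is stable under quasi-sure limits of
`‖·‖_W`-bounded sequences. -/
def FatouClosed (Ps : Set (Measure Ω)) (W : Ω → ℝ) (A : Set (Ω → ℝ)) : Prop :=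
  ∀ X : ℕ → Ω → ℝ, (∀ n, X n ∈ A) → (∃ m : ℝ, ∀ n, m ∈ Bounds Ps W (X n)) →
    ∀ Y : Ω → ℝ, MemLW Ps W Y →
      Polar Ps {ω | ¬ Tendsto (fun n => X n ω) atTop (nhds (Y ω))} → Y ∈ A

/-- Bounded measurable real-valued function. -/
def BddMeas (X : Ω → ℝ) : Prop := Measurable X ∧ ∃ c : ℝ, ∀ ω, |X ω| ≤ c

/-- sensitive No Free Lunch with Vanishing Risk: any quasi-surely nonnegative
bounded measurable `ξ` which is a `‖·‖_{Ps,∞}`-limit of elements of `𝒞̃ ∩ L^∞`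
vanishes quasi surely. -/
def sNFLVR (Ps : Set (Measure Ω)) (W : Ω → ℝ) (Kc : Set (Ω → ℝ)) : Prop :=
  ∀ ξ : Ω → ℝ, BddMeas ξ → LeQS Ps (fun _ => 0) ξ →
    (∃ X : ℕ → Ω → ℝ,
      (∀ n, X n ∈ coneCTilde Ps W Kc ∧ MemLW Ps (fun _ => 1) (X n)) ∧
      Tendsto (fun n => normW Ps (fun _ => 1) (fun ω => X n ω - ξ ω)) atTop (nhds 0)) →
    EqQS Ps ξ (fun _ => 0)

/-- No Arbitrage for the cone `Kc`. -/
def NA (Ps : Set (Measure Ω)) (Kc : Set (Ω → ℝ)) : Prop :=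
  ∀ k ∈ Kc, LeQS Ps (fun _ => 0) k → EqQS Ps k (fun _ => 0)

/-- `Ps_W`: probability measures dominated by some member of `Ps` and integrating `W`. -/
def PW (Ps : Set (Measure Ω)) (W : Ω → ℝ) : Set (Measure Ω) :=
  {Q | IsProbabilityMeasure Q ∧ (∃ P ∈ Ps, Q ≪ P) ∧ Integrable W Q}

/-- An approximate separating class `(Q_n)_{n ≥ 1}`. -/
def ApproxSep (Ps : Set (Measure Ω)) (W : Ω → ℝ) (Kc : Set (Ω → ℝ))
    (Q : ℕ → Measure Ω) : Prop :=
  (∀ n : ℕ, 1 ≤ n → Q n ∈ PW Ps W) ∧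
  (∃ Pbar ∈ Ps, ∀ n : ℕ, 1 ≤ n → Q n ≪ Pbar) ∧
  (∀ n : ℕ, 1 ≤ n → ∀ X ∈ coneCLam Ps W Kc (n : ℝ), ∫ ω, X ω ∂(Q n) ≤ 1 / (n : ℝ))

/-- `Q_app ≈ Ps` : the approximate separating classes and `Ps` share the same
polar sets. -/
def QappEquivP (Ps : Set (Measure Ω)) (W : Ω → ℝ) (Kc : Set (Ω → ℝ)) : Prop :=
  ∀ A : Set Ω, MeasurableSet A →
    ((∀ Q : ℕ → Measure Ω, ApproxSep Ps W Kc Q → ∀ n : ℕ, 1 ≤ n → Q n A = 0) ↔ Polar Ps A)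

/-- The superhedging-type functional `ρ_A`, with values in `EReal` and the
convention `inf ∅ = +∞`. -/
noncomputable def rho (A : Set (Ω → ℝ)) (X : Ω → ℝ) : EReal :=
  sInf {y : EReal | ∃ x : ℝ, y = (x : EReal) ∧ (fun ω => X ω - x) ∈ A}

end Paper

/-!
Fatou closedness passes from `𝒞` to each `𝒞̃_λ`. If `X n ∈ 𝒞̃_λ` converges to `X`, fix `P` and a
measurable set `A` of full `P`-measure on which each `X n` is dominated by some `k n ∈ 𝒦_λ`. Raising
`X n` to the floor `-λW` on `A`, and replacing it by that floor off `A`, gives claims dominated by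
`k n` quasi surely, hence in `𝒞`; so their limit is dominated quasi surely by some `k ∈ 𝒦`, which
lies above the floor and dominates `X` on `A`.

For a Fatou closed downward closed set `𝒜`, `ρ_𝒜 X > 0` just means `X ∉ 𝒜`, which makes (a), (b) and
(c) statements about the nonnegative elements of the `𝒞̃_λ`. To pass from indicators to general
claims, dominate the indicator of `{X > 1/(n+1)}` by `(n+1) X ∈ 𝒞̃_{(n+1)λ}`.
-/

namespace Paper

section QuasiSure

variable {Ω : Type*} [MeasurableSpace Ω] {Ps : Set (Measure Ω)} {P : Measure Ω} {X Y : Ω → ℝ}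

theorem Polar.mono {M N : Set Ω} (hN : Polar Ps N) (hMN : M ⊆ N) : Polar Ps M :=
  let ⟨N', hN', hsub, hnull⟩ := hN
  ⟨N', hN', hMN.trans hsub, hnull⟩

theorem Polar.sUnion {S : Set (Set Ω)} (hS : S.Countable) (h : ∀ N ∈ S, Polar Ps N) :
    Polar Ps (⋃₀ S) := by
  choose! N' hN' hsub hnull using h
  refine ⟨⋃ N ∈ S, N' N, .biUnion hS hN', ?_, fun P hP =>
    (measure_biUnion_null_iff hS).2 fun N hN => hnull N hN P hP⟩
  exact Set.sUnion_eq_biUnion ▸ Set.iUnion₂_mono hsub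

/-- The filter of events that hold `Ps`-quasi surely, so that q.s. statements can be combined with
the `Eventually` API: `X ≤ᶠ[qs Ps] Y` is `LeQS Ps X Y` and `X =ᶠ[qs Ps] Y` is `EqQS Ps X Y`. -/
def qs (Ps : Set (Measure Ω)) : Filter Ω :=
  .ofCountableUnion {N | Polar Ps N} (fun _ => Polar.sUnion) fun _ hN _ => Polar.mono hN

instance : CountableInterFilter (qs Ps) :=
  countableInter_ofCountableUnion ..

theorem eventually_qs {p : Ω → Prop} : (∀ᶠ ω in qs Ps, p ω) ↔ Polar Ps {ω | ¬ p ω} :=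
  Iff.rfl

theorem leQS_iff : LeQS Ps X Y ↔ X ≤ᶠ[qs Ps] Y :=
  Iff.rfl

theorem eqQS_iff : EqQS Ps X Y ↔ X =ᶠ[qs Ps] Y :=
  Iff.rfl

theorem polar_iff {N : Set Ω} : Polar Ps N ↔ ∀ᶠ ω in qs Ps, ω ∉ N := by
  simp only [eventually_qs, not_not, Set.ofPred_mem_eq]

theorem ae_le_qs (hP : P ∈ Ps) : ae P ≤ qs Ps := by
  rintro s ⟨N', -, hsub, hnull⟩
  exact measure_mono_null hsub (hnull P hP)

end QuasiSure

section WeightedSpace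

variable {Ω : Type*} [MeasurableSpace Ω] {Ps : Set (Measure Ω)} {W X : Ω → ℝ} {c m : ℝ}

theorem mem_bounds_iff : m ∈ Bounds Ps W X ↔ 0 ≤ m ∧ ∀ᶠ ω in qs Ps, |X ω| ≤ m * W ω := by
  simp only [Bounds, Set.mem_ofPred_eq, eventually_qs, not_le]

theorem BddMeas.memLW (hX : BddMeas X) (hW : ∀ ω, 1 ≤ W ω) : MemLW Ps W X := by
  obtain ⟨hXm, c, hc⟩ := hX
  refine ⟨hXm, |c|, mem_bounds_iff.2 ⟨abs_nonneg c, .of_forall fun ω => ?_⟩⟩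
  calc |X ω| ≤ |c| := (hc ω).trans (le_abs_self c)
    _ ≤ |c| * W ω := le_mul_of_one_le_right (abs_nonneg c) (hW ω)

theorem bddMeas_indicator_const {A : Set Ω} (hA : MeasurableSet A) (c : ℝ) :
    BddMeas (A.indicator fun _ => c) :=
  ⟨measurable_const.indicator hA, |c|, norm_indicator_le_norm_self fun _ => c⟩

theorem MemLW.const_mul (hX : MemLW Ps W X) (c : ℝ) : MemLW Ps W fun ω => c * X ω := by
  obtain ⟨hXm, m, hm⟩ := hX
  obtain ⟨hm0, hm⟩ := mem_bounds_iff.1 hm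
  refine ⟨hXm.const_mul c, |c| * m, mem_bounds_iff.2 ⟨by positivity, ?_⟩⟩
  filter_upwards [hm] with ω hω
  rw [abs_mul, mul_assoc]
  gcongr

theorem add_mem_bounds_sub_const {r : ℝ} (hW : ∀ ω, 1 ≤ W ω) (hm : m ∈ Bounds Ps W X)
    (hc : |c| ≤ r) : m + r ∈ Bounds Ps W fun ω => X ω - c := by
  have hr : 0 ≤ r := (abs_nonneg c).trans hc
  obtain ⟨hm0, hm⟩ := mem_bounds_iff.1 hm
  refine mem_bounds_iff.2 ⟨by positivity, ?_⟩
  filter_upwards [hm] with ω hω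
  calc |X ω - c| ≤ |X ω| + |c| := abs_sub _ _
    _ ≤ m * W ω + r * W ω := add_le_add hω (hc.trans (le_mul_of_one_le_right hr (hW ω)))
    _ = (m + r) * W ω := (add_mul ..).symm

theorem exists_indicator_leQS_const_mul (hX : Measurable X) (hX0 : LeQS Ps (fun _ => 0) X)
    (hne : ¬ EqQS Ps X fun _ => 0) :
    ∃ A : Set Ω, MeasurableSet A ∧ ¬ Polar Ps A ∧
      ∃ c > 0, LeQS Ps (A.indicator fun _ => 1) fun ω => c * X ω := by
  obtain ⟨n, hn⟩ : ∃ n : ℕ, ¬ Polar Ps {ω | 1 / ((n : ℝ) + 1) < X ω} := by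
    by_contra! hpolar
    refine hne (eqQS_iff.2 ?_)
    filter_upwards [leQS_iff.1 hX0, eventually_countable_forall.2 fun n => polar_iff.1 (hpolar n)]
      with ω hnonneg hsmall
    by_contra hω
    obtain ⟨n, hn⟩ := exists_nat_one_div_lt (hnonneg.lt_of_ne' hω)
    exact hsmall n hn
  have hc : (0 : ℝ) < n + 1 := by positivity
  refine ⟨_, measurableSet_lt measurable_const hX, hn, n + 1, hc, leQS_iff.2 ?_⟩
  filter_upwards [leQS_iff.1 hX0] with ω hω
  refine Set.indicator_apply_le' (fun hlt => ?_) fun _ => mul_nonneg hc.le hω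
  exact ((div_lt_iff₀' hc).1 hlt).le

end WeightedSpace

section Rho

variable {Ω : Type*} {W X : Ω → ℝ} {A : Set (Ω → ℝ)}

theorem rho_lt_coe_iff {c : ℝ} : rho A X < c ↔ ∃ x < c, (fun ω => X ω - x) ∈ A := by
  simp only [rho, sInf_lt_iff, Set.mem_ofPred_eq]
  constructor
  · rintro ⟨_, ⟨x, rfl, hx⟩, hxc⟩
    exact ⟨x, EReal.coe_lt_coe_iff.1 hxc, hx⟩
  · rintro ⟨x, hxc, hx⟩
    exact ⟨x, ⟨x, rfl, hx⟩, EReal.coe_lt_coe_iff.2 hxc⟩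

theorem rho_nonpos_of_mem (hX : X ∈ A) : rho A X ≤ 0 :=
  sInf_le ⟨0, rfl, by simpa only [sub_zero] using hX⟩

variable [MeasurableSpace Ω] {Ps : Set (Measure Ω)}

/-- `A` is downward closed in `L^W` for the quasi-sure order, which is what makes
`{x | X - x ∈ A}` an upper set, so that `rho A X` is the threshold of membership. -/
def DownwardClosed (Ps : Set (Measure Ω)) (W : Ω → ℝ) (A : Set (Ω → ℝ)) : Prop :=
  ∀ X ∈ A, ∀ Y, MemLW Ps W Y → LeQS Ps Y X → Y ∈ A

theorem DownwardClosed.sub_const_mem_of_rho_lt (hA : DownwardClosed Ps W A)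
    (hW : ∀ ω, 1 ≤ W ω) (hX : MemLW Ps W X) {c : ℝ} (hc : rho A X < c) :
    (fun ω => X ω - c) ∈ A := by
  obtain ⟨x, hxc, hx⟩ := rho_lt_coe_iff.1 hc
  obtain ⟨hXm, m, hm⟩ := hX
  refine hA _ hx _ ⟨hXm.sub_const c, _, add_mem_bounds_sub_const hW hm le_rfl⟩ ?_
  exact leQS_iff.2 (.of_forall fun ω => sub_le_sub_left hxc.le _)

theorem FatouClosed.mem_of_rho_nonpos (hA : FatouClosed Ps W A) (hdown : DownwardClosed Ps W A)
    (hW : ∀ ω, 1 ≤ W ω) (hX : MemLW Ps W X) (hρ : rho A X ≤ 0) : X ∈ A := by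
  obtain ⟨m, hm⟩ := hX.2
  refine hA (fun n ω => X ω - 1 / ((n : ℝ) + 1)) (fun n => ?_) ⟨m + 1, fun n => ?_⟩ X hX
    (eventually_qs.1 (.of_forall fun ω => ?_))
  · have hpos : (0 : EReal) < (1 / ((n : ℝ) + 1) : ℝ) :=
      EReal.coe_pos.2 Nat.one_div_pos_of_nat
    exact hdown.sub_const_mem_of_rho_lt hW hX (hρ.trans_lt hpos)
  · refine add_mem_bounds_sub_const hW hm ?_
    rw [abs_of_pos Nat.one_div_pos_of_nat]
    simpa only [Nat.cast_zero, zero_add, div_one] using Nat.one_div_le_one_div (α := ℝ) n.zero_le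
  · simpa only [sub_zero] using tendsto_const_nhds.sub
      (tendsto_one_div_add_atTop_nhds_zero_nat (𝕜 := ℝ))

theorem FatouClosed.rho_pos_iff (hA : FatouClosed Ps W A) (hdown : DownwardClosed Ps W A)
    (hW : ∀ ω, 1 ≤ W ω) (hX : MemLW Ps W X) : 0 < rho A X ↔ X ∉ A := by
  rw [← not_le]
  exact not_congr ⟨hA.mem_of_rho_nonpos hdown hW hX, rho_nonpos_of_mem⟩

end Rho

section FloorOff

variable {Ω : Type*} {W : Ω → ℝ} {l m : ℝ} {A : Set Ω} {X : Ω → ℝ} {ω : Ω}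

open scoped Classical in
/-- The claim `X ∨ (-λW)` on `A` and `-λW` off `A`. It turns domination of `X` by an element of
`𝒦_λ` on `A` alone into domination everywhere (`floorOff_le`). -/
noncomputable def floorOff (W : Ω → ℝ) (l : ℝ) (A : Set Ω) (X : Ω → ℝ) : Ω → ℝ :=
  A.piecewise (fun ω => max (X ω) (-l * W ω)) fun ω => -l * W ω

theorem floorOff_of_mem (hω : ω ∈ A) : floorOff W l A X ω = max (X ω) (-l * W ω) :=
  if_pos hω

theorem floorOff_of_notMem (hω : ω ∉ A) : floorOff W l A X ω = -l * W ω :=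
  if_neg hω

theorem neg_mul_le_floorOff : -l * W ω ≤ floorOff W l A X ω := by
  by_cases hω : ω ∈ A
  · exact (le_max_right _ _).trans_eq (floorOff_of_mem hω).symm
  · exact (floorOff_of_notMem hω).ge

theorem floorOff_le {k : ℝ} (hk : -l * W ω ≤ k) (hXk : ω ∈ A → X ω ≤ k) :
    floorOff W l A X ω ≤ k := by
  by_cases hω : ω ∈ A
  · exact (floorOff_of_mem hω).trans_le (max_le (hXk hω) hk)
  · exact (floorOff_of_notMem hω).trans_le hk

theorem abs_floorOff_le (hW : 0 ≤ W ω) (hX : |X ω| ≤ m * W ω) :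
    |floorOff W l A X ω| ≤ (m + |l|) * W ω := by
  have hadd : |floorOff W l A X ω| ≤ |X ω| + |-l * W ω| := by
    by_cases hω : ω ∈ A
    · rw [floorOff_of_mem hω]
      exact abs_max_le_max_abs_abs.trans (max_le_add_of_nonneg (abs_nonneg _) (abs_nonneg _))
    · rw [floorOff_of_notMem hω]
      exact le_add_of_nonneg_left (abs_nonneg _)
  calc |floorOff W l A X ω| ≤ |X ω| + |-l * W ω| := hadd
    _ = |X ω| + |l| * W ω := by rw [abs_mul, abs_neg, abs_of_nonneg hW]
    _ ≤ (m + |l|) * W ω := by linarith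

theorem tendsto_floorOff {ι : Type*} {F : Filter ι} {Z : ι → Ω → ℝ}
    (h : Tendsto (fun i => Z i ω) F (𝓝 (X ω))) :
    Tendsto (fun i => floorOff W l A (Z i) ω) F (𝓝 (floorOff W l A X ω)) := by
  by_cases hω : ω ∈ A
  · simpa only [floorOff_of_mem hω] using h.max tendsto_const_nhds
  · simpa only [floorOff_of_notMem hω] using tendsto_const_nhds

variable [MeasurableSpace Ω] {Ps : Set (Measure Ω)}

theorem measurable_floorOff (hW : Measurable W) (hA : MeasurableSet A) (hX : Measurable X) :
    Measurable (floorOff W l A X) :=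
  (hX.max (hW.const_mul _)).piecewise hA (hW.const_mul _)

theorem floorOff_mem_bounds (hW : ∀ ω, 0 ≤ W ω) (hm : m ∈ Bounds Ps W X) :
    m + |l| ∈ Bounds Ps W (floorOff W l A X) := by
  obtain ⟨hm0, hm⟩ := mem_bounds_iff.1 hm
  refine mem_bounds_iff.2 ⟨by positivity, ?_⟩
  filter_upwards [hm] with ω hω using abs_floorOff_le (hW ω) hω

theorem MemLW.floorOff (hX : MemLW Ps W X) (hWm : Measurable W) (hW : ∀ ω, 0 ≤ W ω)
    (hA : MeasurableSet A) : MemLW Ps W (floorOff W l A X) :=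
  let ⟨hXm, _, hm⟩ := hX
  ⟨measurable_floorOff hWm hA hXm, _, floorOff_mem_bounds hW hm⟩

end FloorOff

section ConeCTildeLam

variable {Ω : Type*} [MeasurableSpace Ω] {Ps : Set (Measure Ω)} {W : Ω → ℝ}
  {Kc : Set (Ω → ℝ)} {l : ℝ} {P : Measure Ω} {X : Ω → ℝ}

theorem downwardClosed_coneCTildeLam : DownwardClosed Ps W (coneCTildeLam Ps W Kc l) := by
  rintro X ⟨-, hX⟩ Y hY hYX
  refine ⟨hY, fun P hP => ?_⟩
  obtain ⟨k, hk, hXk⟩ := hX P hP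
  exact ⟨k, hk, EventuallyLE.trans (ae_le_qs hP (leQS_iff.1 hYX)) hXk⟩

theorem const_mul_mem_coneCTildeLam {c : ℝ} (hc : 0 ≤ c)
    (hKc : ∀ k ∈ Kc, (fun ω => c * k ω) ∈ Kc) (hX : X ∈ coneCTildeLam Ps W Kc l) :
    (fun ω => c * X ω) ∈ coneCTildeLam Ps W Kc (c * l) := by
  refine ⟨hX.1.const_mul c, fun P hP => ?_⟩
  obtain ⟨k, ⟨hk, hlk⟩, hXk⟩ := hX.2 P hP
  refine ⟨fun ω => c * k ω, ⟨hKc k hk, leQS_iff.2 ?_⟩, ?_⟩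
  · filter_upwards [leQS_iff.1 hlk] with ω hω
    calc -(c * l) * W ω = c * (-l * W ω) := by ring
      _ ≤ c * k ω := mul_le_mul_of_nonneg_left hω hc
  · filter_upwards [hXk] with ω hω using mul_le_mul_of_nonneg_left hω hc

theorem exists_floorOff_mem_coneC {ι : Type*} [Countable ι] {X : ι → Ω → ℝ}
    (hWm : Measurable W) (hW : ∀ ω, 0 ≤ W ω) (hX : ∀ i, X i ∈ coneCTildeLam Ps W Kc l)
    (hP : P ∈ Ps) :
    ∃ A, MeasurableSet A ∧ A ∈ ae P ∧ ∀ i, floorOff W l A (X i) ∈ coneC Ps W Kc := by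
  choose k hk hXk using fun i => (hX i).2 P hP
  obtain ⟨A, hAP, hA, hAk⟩ := (ae_all_iff.2 hXk).exists_measurable_mem
  refine ⟨A, hA, hAP, fun i => ⟨(hX i).1.floorOff hWm hW hA, k i, (hk i).1, leQS_iff.2 ?_⟩⟩
  filter_upwards [leQS_iff.1 (hk i).2] with ω hω using floorOff_le hω fun hωA => hAk ω hωA i

theorem mem_coneCTildeLam_of_floorOff (hX : MemLW Ps W X)
    (h : ∀ P ∈ Ps, ∃ A ∈ ae P, floorOff W l A X ∈ coneC Ps W Kc) :
    X ∈ coneCTildeLam Ps W Kc l := by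
  refine ⟨hX, fun P hP => ?_⟩
  obtain ⟨A, hAP, -, k, hk, hle⟩ := h P hP
  refine ⟨k, ⟨hk, leQS_iff.2 ?_⟩, ?_⟩
  · filter_upwards [leQS_iff.1 hle] with ω hω using neg_mul_le_floorOff.trans hω
  · filter_upwards [ae_le_qs hP (leQS_iff.1 hle), hAP] with ω hω hωA
    exact (le_max_left _ _).trans ((floorOff_of_mem hωA).symm.trans_le hω)

theorem FatouClosed.coneCTildeLam (hC : FatouClosed Ps W (coneC Ps W Kc))
    (hWm : Measurable W) (hW : ∀ ω, 0 ≤ W ω) (l : ℝ) :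
    FatouClosed Ps W (coneCTildeLam Ps W Kc l) := by
  rintro X hX ⟨m, hm⟩ Y hY hXY
  refine mem_coneCTildeLam_of_floorOff hY fun P hP => ?_
  obtain ⟨A, hA, hAP, hXA⟩ := exists_floorOff_mem_coneC hWm hW hX hP
  refine ⟨A, hAP, hC _ hXA ⟨_, fun n => floorOff_mem_bounds hW (hm n)⟩ _
    (hY.floorOff hWm hW hA) (eventually_qs.1 ?_)⟩
  filter_upwards [eventually_qs.2 hXY] with ω hω using tendsto_floorOff hω

theorem exists_indicator_mem_coneCTildeLam (hW : ∀ ω, 1 ≤ W ω)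
    (hKc : ∀ k ∈ Kc, ∀ c : ℝ, 0 < c → (fun ω => c * k ω) ∈ Kc)
    (hX : X ∈ coneCTildeLam Ps W Kc l) (hX0 : LeQS Ps (fun _ => 0) X)
    (hne : ¬ EqQS Ps X fun _ => 0) :
    ∃ A : Set Ω, MeasurableSet A ∧ ¬ Polar Ps A ∧
      ∃ c > 0, (A.indicator fun _ => 1) ∈ coneCTildeLam Ps W Kc (c * l) := by
  obtain ⟨A, hA, hAP, c, hc, hle⟩ := exists_indicator_leQS_const_mul hX.1.1 hX0 hne
  have hcX := const_mul_mem_coneCTildeLam hc.le (fun k hk => hKc k hk c hc) hX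
  exact ⟨A, hA, hAP, c, hc,
    downwardClosed_coneCTildeLam _ hcX _ ((bddMeas_indicator_const hA 1).memLW hW) hle⟩

end ConeCTildeLam

theorem sNABR_iff_rho_pos_general {Ω : Type*} [MeasurableSpace Ω] {Ps : Set (Measure Ω)}
    {W : Ω → ℝ} (hWmeas : Measurable W) (hW1 : ∀ ω, 1 ≤ W ω) {Kc : Set (Ω → ℝ)}
    (hKc : ∀ k ∈ Kc, ∀ c : ℝ, 0 < c → (fun ω => c * k ω) ∈ Kc)
    (hFatou : FatouClosed Ps W (coneC Ps W Kc)) :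
    [∀ X : Ω → ℝ, BddMeas X → LeQS Ps (fun _ => 0) X →
        (∃ l : ℝ, 0 ≤ l ∧ X ∈ coneCTildeLam Ps W Kc l) → EqQS Ps X (fun _ => 0),
      ∀ l : ℝ, 0 ≤ l →
        ∀ ξ : Ω → ℝ, BddMeas ξ → LeQS Ps (fun _ => 0) ξ → ¬ EqQS Ps ξ (fun _ => 0) →
          (0 : EReal) < rho (coneCTildeLam Ps W Kc l) ξ,
      ∀ l : ℝ, 0 ≤ l → ∀ A : Set Ω, MeasurableSet A → ¬ Polar Ps A →
        (0 : EReal) < rho (coneCTildeLam Ps W Kc l) (A.indicator fun _ => (1 : ℝ))].TFAE := by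
  have rho_pos_iff (l : ℝ) {ξ : Ω → ℝ} (hξ : BddMeas ξ) :
      0 < rho (coneCTildeLam Ps W Kc l) ξ ↔ ξ ∉ coneCTildeLam Ps W Kc l :=
    (hFatou.coneCTildeLam hWmeas (fun ω => zero_le_one.trans (hW1 ω)) l).rho_pos_iff
      downwardClosed_coneCTildeLam hW1 (hξ.memLW hW1)
  tfae_have 1 → 2 := fun ha l hl ξ hξ hξ0 hne =>
    (rho_pos_iff l hξ).2 fun hmem => hne (ha ξ hξ hξ0 ⟨l, hl, hmem⟩)
  tfae_have 2 → 3 := fun hb l hl A hA hAP =>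
    hb l hl _ (bddMeas_indicator_const hA 1)
      (leQS_iff.2 (.of_forall fun _ => Set.indicator_nonneg (fun _ _ => zero_le_one) _))
      fun heq => hAP (heq.mono fun _ hω => by simp [hω])
  tfae_have 3 → 1 := by
    rintro hc X - hX0 ⟨l, hl, hX⟩
    by_contra hne
    obtain ⟨A, hA, hAP, c, hc0, hmem⟩ := exists_indicator_mem_coneCTildeLam hW1 hKc hX hX0 hne
    exact (rho_pos_iff _ (bddMeas_indicator_const hA 1)).1
      (hc (c * l) (by positivity) A hA hAP) hmem
  tfae_finish

/-- **Lemma (`strict:positive1`).** Assume `𝒞` is Fatou closed. Then sNABR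
(every nonnegative bounded claim in some `𝒞̃_λ` vanishes q.s.) is equivalent to
strict positivity of `ρ_{𝒞̃_λ}` on nonzero nonnegative bounded claims for all
`λ ≥ 0`, and to strict positivity of `ρ_{𝒞̃_λ}` on indicators of non-polar
events for all `λ ≥ 0`. -/
theorem sNABR_iff_rho_pos {Ω : Type*} [MeasurableSpace Ω]
    (Ps : Set (Measure Ω)) (hPsne : Ps.Nonempty)
    (hPsprob : ∀ P ∈ Ps, IsProbabilityMeasure P)
    (W : Ω → ℝ) (hWmeas : Measurable W) (hW1 : ∀ ω, 1 ≤ W ω)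
    (Kc : Set (Ω → ℝ)) (hKc : IsConvexCone Kc)
    (hFatou : FatouClosed Ps W (coneC Ps W Kc)) :
    ((∀ X : Ω → ℝ, BddMeas X → LeQS Ps (fun _ => 0) X →
        (∃ l : ℝ, 0 ≤ l ∧ X ∈ coneCTildeLam Ps W Kc l) → EqQS Ps X (fun _ => 0)) ↔
      (∀ l : ℝ, 0 ≤ l →
        ∀ ξ : Ω → ℝ, BddMeas ξ → LeQS Ps (fun _ => 0) ξ → ¬ EqQS Ps ξ (fun _ => 0) →
          (0 : EReal) < rho (coneCTildeLam Ps W Kc l) ξ)) ∧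
    ((∀ l : ℝ, 0 ≤ l →
        ∀ ξ : Ω → ℝ, BddMeas ξ → LeQS Ps (fun _ => 0) ξ → ¬ EqQS Ps ξ (fun _ => 0) →
          (0 : EReal) < rho (coneCTildeLam Ps W Kc l) ξ) ↔
      (∀ l : ℝ, 0 ≤ l → ∀ A : Set Ω, MeasurableSet A → ¬ Polar Ps A →
        (0 : EReal) < rho (coneCTildeLam Ps W Kc l) (A.indicator fun _ => (1 : ℝ)))) :=
  have htfae := sNABR_iff_rho_pos_general hWmeas hW1
    (fun k hk c hc => hKc.2.2.1 k hk c hc.le) hFatou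
  ⟨htfae.out 0 1, htfae.out 1 2⟩

end Paper
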